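/- Let G be a connected simple graph on a finite vertex set V with n = |V|, and let f = f_G(V) = 2 + e(G) − n, where e(G) is the number of edges of G (for a planar embedding of G, f is the number of faces). Then the alternating sum of total island counts over all subsets of at least 3 vertices recovers χ − 2f with χ = 2: Σ_{S ⊆ V, |S| ≥ 3} (−1)^{|S|} · β_{G[S]}(−1) = 2 − 2·f. -/

import Mathlib

open Polynomial

/-- `islandF G S` is the quantity `f_G(S) = 2·c_G(S) + e_G(S) − |S|`, where `c_G(S)`
and `e_G(S)` are the numbers of connected components and edges of the induced
subgraph `G[S]`.  For a planar graph it equals the total number of faces of a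
planar embedding of `G[S]`, summed over connected components. -/
noncomputable def islandF {V : Type*} [Fintype V] [DecidableEq V]
    (G : SimpleGraph V) (S : Finset V) : ℤ :=
  2 * Nat.card ((G.induce (S : Set V)).ConnectedComponent)
    + Nat.card ((G.induce (S : Set V)).edgeSet) - S.card

/-- The total island boundary polynomial `β_G(x) = Σ_{∅ ≠ S ⊆ V} f_G(S)·x^{|S|−1}`. -/
noncomputable def islandPoly {V : Type*} [Fintype V] [DecidableEq V]
    (G : SimpleGraph V) : Polynomial ℤ :=
  ∑ S ∈ Finset.univ.powerset.filter (fun S : Finset V => S.Nonempty),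
    Polynomial.C (islandF G S) * Polynomial.X ^ (S.card - 1)

lemma islandF_iso {V W : Type*} [Fintype V] [DecidableEq V] [Fintype W] [DecidableEq W]
    (G : SimpleGraph V) (H : SimpleGraph W) (S : Finset V) (T : Finset W)
    (φ : G.induce (S : Set V) ≃g H.induce (T : Set W)) : islandF G S = islandF H T := by
  unfold islandF
  have h1 := Nat.card_congr φ.connectedComponentEquiv
  have h2 := Nat.card_congr φ.mapEdgeSet
  have h3 : S.card = T.card := by
    have := Nat.card_congr φ.toEquiv
    simpa using this
  rw [h1, h2, h3]

lemma islandF_induce {V : Type*} [Fintype V] [DecidableEq V] (G : SimpleGraph V)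
    (S : Finset V) [Fintype (S : Set V)] [DecidableEq (S : Set V)] (T : Finset (S : Set V)) :
    islandF (G.induce (S : Set V)) T = islandF G (T.map (Function.Embedding.subtype _)) := by
  apply islandF_iso
  refine ⟨⟨fun x => ⟨x.1.1, ?_⟩, fun x => ⟨⟨x.1, ?_⟩, ?_⟩, ?_, ?_⟩, ?_⟩
  · have := x.2
    simp only [Finset.mem_coe] at this
    simp only [Finset.coe_map, Set.mem_image, Finset.mem_coe]
    exact ⟨x.1, this, rfl⟩
  · obtain ⟨x, hx⟩ := x
    simp only [Finset.coe_map, Set.mem_image, Finset.mem_coe] at hx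
    obtain ⟨y, hy, rfl⟩ := hx
    exact y.2
  · obtain ⟨x, hx⟩ := x
    simp only [Finset.coe_map, Set.mem_image, Finset.mem_coe] at hx
    obtain ⟨y, hy, rfl⟩ := hx
    exact hy
  · intro x; rfl
  · intro x; rfl
  · intro a b; rfl

lemma islandF_empty {V : Type*} [Fintype V] [DecidableEq V] (G : SimpleGraph V) :
    islandF G ∅ = 0 := by
  unfold islandF
  have : IsEmpty ((∅ : Finset V) : Set V) := by simp
  have h : IsEmpty (G.induce ((∅ : Finset V) : Set V)).ConnectedComponent :=
    ⟨fun c => c.ind (fun v => this.elim v)⟩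
  have h2 : IsEmpty (G.induce ((∅ : Finset V) : Set V)).edgeSet :=
    ⟨fun e => by
      obtain ⟨e, he⟩ := e
      induction e with | _ a b => exact this.elim a⟩
  simp

lemma islandPoly_eval {V : Type*} [Fintype V] [DecidableEq V] (G : SimpleGraph V)
    (S : Finset V) [Fintype (S : Set V)] [DecidableEq (S : Set V)] :
    (islandPoly (G.induce (S : Set V))).eval (-1)
      = - ∑ T ∈ S.powerset, (-1 : ℤ) ^ T.card * islandF G T := by
  unfold islandPoly
  rw [eval_finsetSum, Finset.sum_filter, ← Finset.sum_neg_distrib]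
  refine Finset.sum_bij (fun T _ => T.map (Function.Embedding.subtype _)) ?_ ?_ ?_ ?_
  · intro T _
    rw [Finset.mem_powerset]
    intro x hx
    simp only [Finset.mem_map] at hx
    obtain ⟨y, _, rfl⟩ := hx
    exact y.2
  · intro a _ b _ h
    exact Finset.map_injective _ h
  · intro T hT
    rw [Finset.mem_powerset] at hT
    refine ⟨Finset.univ.filter (fun x => x.1 ∈ T), by simp, ?_⟩
    ext x
    simp only [Finset.mem_map, Finset.mem_filter, Finset.mem_univ, true_and]
    constructor
    · rintro ⟨y, hy, rfl⟩; exact hy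
    · intro hx; exact ⟨⟨x, hT hx⟩, hx, rfl⟩
  · intro T _
    split_ifs with h
    · rw [islandF_induce, Finset.card_map]
      obtain ⟨k, hk⟩ : ∃ k, T.card = k + 1 := ⟨T.card - 1, by have := h.card_pos; omega⟩
      simp only [eval_mul, eval_C, eval_pow, eval_X, hk]
      rw [Nat.add_sub_cancel, pow_succ]; ring
    · rw [Finset.not_nonempty_iff_eq_empty] at h
      subst h
      simp [islandF_empty]

lemma mobius_sum {V : Type*} [Fintype V] [DecidableEq V] (h : Finset V → ℤ) :
    ∑ S : Finset V, (-1 : ℤ) ^ S.card * (- ∑ T ∈ S.powerset, (-1 : ℤ) ^ T.card * h T)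
      = - h Finset.univ := by
  have key : ∀ T : Finset V, ∑ S : Finset V, (if T ⊆ S then (-1 : ℤ) ^ S.card else 0)
      = if T = Finset.univ then (-1) ^ T.card else 0 := by
    intro T
    have : ∑ S : Finset V, (if T ⊆ S then (-1 : ℤ) ^ S.card else 0)
        = ∑ U ∈ Tᶜ.powerset, (-1) ^ T.card * (-1) ^ U.card := by
      rw [← Finset.sum_filter]
      symm
      refine Finset.sum_bij' (fun U _ => T ∪ U) (fun S _ => S \ T) ?_ ?_ ?_ ?_ ?_
      · intro U _; simp
      · intro S _; simp only [Finset.mem_powerset]; intro x; simp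
      · intro U hU
        rw [Finset.mem_powerset] at hU
        ext x
        have := @hU x
        simp at this ⊢; tauto
      · intro S hS; simp at hS; simpa using hS
      · intro U hU
        rw [Finset.mem_powerset] at hU
        rw [Finset.card_union_of_disjoint, pow_add]
        exact (Finset.subset_compl_iff_disjoint_left).1 hU
    rw [this, ← Finset.mul_sum, Finset.sum_powerset_neg_one_pow_card]
    simp [Finset.compl_eq_empty_iff]
  have : ∀ S : Finset V, (-1 : ℤ) ^ S.card * (- ∑ T ∈ S.powerset, (-1 : ℤ) ^ T.card * h T)
      = ∑ T : Finset V, -((-1 : ℤ) ^ T.card * h T) * (if T ⊆ S then (-1 : ℤ) ^ S.card else 0) := by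
    intro S
    rw [← Finset.sum_neg_distrib, Finset.mul_sum]
    have : S.powerset = Finset.univ.filter (fun T => T ⊆ S) := by ext; simp
    rw [this, Finset.sum_filter]
    refine Finset.sum_congr rfl fun T _ => ?_
    split_ifs <;> ring
  simp_rw [this]
  rw [Finset.sum_comm]
  simp_rw [← Finset.mul_sum, key]
  simp only [mul_ite, mul_zero, Finset.sum_ite_eq', Finset.mem_univ, if_true]
  have : ((-1 : ℤ) ^ (Finset.univ : Finset V).card) * (-1) ^ (Finset.univ : Finset V).card = 1 := by
    rw [← mul_pow]; simp
  linear_combination (- h Finset.univ) * this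

lemma islandF_clique {V : Type*} [Fintype V] [DecidableEq V] (G : SimpleGraph V) (S : Finset V)
    (hS : S.Nonempty) (h : G.IsClique S) : islandF G S = 2 + S.card.choose 2 - S.card := by
  classical
  unfold islandF
  rw [SimpleGraph.induce_eq_top.2 h]
  have : Nonempty (S : Set V) := ⟨⟨hS.choose, hS.choose_spec⟩⟩
  have h1 : Nat.card (⊤ : SimpleGraph (S : Set V)).ConnectedComponent = 1 := by
    rw [Nat.card_eq_one_iff_unique]
    exact ⟨SimpleGraph.preconnected_top.subsingleton_connectedComponent,
      ⟨SimpleGraph.connectedComponentMk _ this.some⟩⟩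
  have h2 : Nat.card (⊤ : SimpleGraph (S : Set V)).edgeSet = S.card.choose 2 := by
    rw [Nat.card_eq_fintype_card, ← SimpleGraph.edgeFinset_card,
      SimpleGraph.card_edgeFinset_top_eq_card_choose_two]
    simp
  rw [h1, h2]; simp

lemma islandF_bot {V : Type*} [Fintype V] [DecidableEq V] (G : SimpleGraph V) (S : Finset V)
    (h : G.induce (S : Set V) = ⊥) : islandF G S = S.card := by
  unfold islandF
  rw [h]
  have h1 : Nat.card (⊥ : SimpleGraph (S : Set V)).ConnectedComponent = S.card := by
    have : Function.Bijective (SimpleGraph.connectedComponentMk (⊥ : SimpleGraph (S : Set V))) := by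
      constructor
      · intro a b hab
        rw [SimpleGraph.ConnectedComponent.eq] at hab
        simpa using hab
      · intro c
        exact c.ind fun v => ⟨v, rfl⟩
    rw [← Nat.card_congr (Equiv.ofBijective _ this)]
    simp
  rw [h1]; simp; ring

lemma islandF_singleton {V : Type*} [Fintype V] [DecidableEq V] (G : SimpleGraph V) (v : V) :
    islandF G {v} = 1 := by
  rw [islandF_clique] <;> simp

open Classical in
lemma pair_sum {V : Type*} [Fintype V] [DecidableEq V] (G : SimpleGraph V) (S : Finset V)
    (hS : S.card = 2) : (-1 : ℤ) ^ S.card * (- ∑ T ∈ S.powerset, (-1 : ℤ) ^ T.card * islandF G T)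
      = if G.IsClique S then 1 else 0 := by
  have hne : S.Nonempty := Finset.card_pos.1 (by omega)
  have hF : islandF G S = if G.IsClique S then 1 else 2 := by
    split_ifs with h
    · rw [islandF_clique G S hne h, hS]; simp
    · rw [islandF_bot, hS]; simp
      obtain ⟨u, v, huv, rfl⟩ := Finset.card_eq_two.1 hS
      ext ⟨a, ha⟩ ⟨b, hb⟩
      simp [SimpleGraph.isClique_iff, Set.pairwise_pair, huv, G.adj_comm v u] at h ha hb ⊢
      rcases ha with rfl | rfl <;> rcases hb with rfl | rfl <;>
        first | exact G.irrefl | exact h | exact fun h' => h h'.symm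
  obtain ⟨u, v, huv, rfl⟩ := Finset.card_eq_two.1 hS
  have : ∑ T ∈ ({u, v} : Finset V).powerset, (-1 : ℤ) ^ T.card * islandF G T
      = islandF G ∅ - islandF G {u} - islandF G {v} + islandF G {u, v} := by
    rw [Finset.sum_powerset_insert (by simpa using huv), ← insert_empty_eq v,
      Finset.sum_powerset_insert (by simp), Finset.sum_powerset_insert (by simp)]
    simp [huv]
    ring
  rw [this, islandF_empty, islandF_singleton, islandF_singleton, hF, hS]
  split_ifs <;> norm_num

open Classical in
lemma edge_count {V : Type*} [Fintype V] [DecidableEq V] (G : SimpleGraph V) :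
    ∑ S ∈ Finset.univ.filter (fun S : Finset V => S.card = 2),
      (if G.IsClique S then (1 : ℤ) else 0) = Nat.card G.edgeSet := by
  rw [Finset.sum_boole, Finset.filter_filter, Nat.card_eq_fintype_card,
    ← SimpleGraph.edgeFinset_card]
  congr 1
  symm
  refine Finset.card_bij (fun e _ => e.toFinset) ?_ ?_ ?_
  · intro e he
    rw [SimpleGraph.mem_edgeFinset] at he
    induction e with | _ a b =>
    rw [SimpleGraph.mem_edgeSet] at he
    have := he.ne
    simp [Sym2.toFinset_mk_eq, SimpleGraph.isClique_iff, Set.pairwise_pair, this, he, he.symm]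
  · intro e _ e' _ h
    ext x
    rw [← Sym2.mem_toFinset, h, Sym2.mem_toFinset]
  · intro S hS
    simp only [Finset.mem_filter, Finset.mem_univ, true_and] at hS
    obtain ⟨hS, hc⟩ := hS
    obtain ⟨u, v, huv, rfl⟩ := Finset.card_eq_two.1 hS
    refine ⟨s(u, v), ?_, Sym2.toFinset_mk_eq⟩
    rw [SimpleGraph.mem_edgeFinset, SimpleGraph.mem_edgeSet]
    exact hc (by simp) (by simp) huv

theorem euler_characteristic_emergence {V : Type*} [Fintype V] [DecidableEq V]
    (G : SimpleGraph V) (hconn : G.Connected)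
    (f : ℤ) (hf : f = 2 + (Nat.card G.edgeSet : ℤ) - (Fintype.card V : ℤ)) :
    ∑ S ∈ Finset.univ.powerset.filter (fun S : Finset V => 3 ≤ S.card),
        (-1 : ℤ) ^ S.card * (islandPoly (G.induce (S : Set V))).eval (-1)
      = 2 - 2 * f := by
  simp_rw [islandPoly_eval]
  have huniv : islandF G Finset.univ = f := by
    rw [hf]
    have φ : G.induce ((Finset.univ : Finset V) : Set V) ≃g G := by
      rw [Finset.coe_univ]; exact SimpleGraph.induceUnivIso G
    unfold islandF
    rw [Nat.card_congr φ.connectedComponentEquiv, Nat.card_congr φ.mapEdgeSet]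
    have : Nat.card G.ConnectedComponent = 1 := by
      rw [Nat.card_eq_one_iff_unique]
      exact ⟨hconn.preconnected.subsingleton_connectedComponent,
        ⟨G.connectedComponentMk hconn.nonempty.some⟩⟩
    rw [this]; simp
  have hm := mobius_sum (islandF G)
  rw [huniv] at hm
  set g : Finset V → ℤ := fun S =>
    (-1 : ℤ) ^ S.card * (- ∑ T ∈ S.powerset, (-1 : ℤ) ^ T.card * islandF G T) with hg
  change ∑ S, g S = -f at hm
  change ∑ S ∈ Finset.univ.powerset.filter (fun S : Finset V => 3 ≤ S.card), g S = _
  have h2 : ∑ S ∈ Finset.univ.filter (fun S : Finset V => S.card = 2), g S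
      = Nat.card G.edgeSet := by
    classical
    rw [← edge_count]
    refine Finset.sum_congr rfl fun S hS => ?_
    rw [hg]
    convert pair_sum G S (by simpa using hS)
  have h1 : ∑ S ∈ Finset.univ.filter (fun S : Finset V => S.card = 1), g S
      = - Fintype.card V := by
    have : Finset.univ.filter (fun S : Finset V => S.card = 1)
        = Finset.univ.image (fun v : V => ({v} : Finset V)) := by
      ext S
      simp [Finset.card_eq_one, eq_comm]
    rw [this, Finset.sum_image (by intro a _ b _ h; simpa using h)]
    have : ∀ v : V, g {v} = -1 := by
      intro v
      simp only [hg]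
      rw [← insert_empty_eq v, Finset.sum_powerset_insert (by simp)]
      simp [islandF_empty, islandF_singleton]
    simp [this]
  have h0 : g ∅ = 0 := by simp [hg, islandF_empty]
  have hsplit : ∑ S, g S
      = ∑ S ∈ Finset.univ.powerset.filter (fun S : Finset V => 3 ≤ S.card), g S
        + ∑ S ∈ Finset.univ.filter (fun S : Finset V => S.card = 2), g S
        + ∑ S ∈ Finset.univ.filter (fun S : Finset V => S.card = 1), g S := by
    rw [Finset.powerset_univ]
    simp only [Finset.sum_filter]
    rw [← Finset.sum_add_distrib, ← Finset.sum_add_distrib]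
    refine Finset.sum_congr rfl fun S _ => ?_
    rcases Nat.eq_zero_or_pos S.card with h | h
    · rw [Finset.card_eq_zero] at h
      subst h
      simp [h0]
    · split_ifs <;> first | omega | simp
  rw [h2, h1] at hsplit
  linarith
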